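/- Bombieri-type lemma, part 2 (Lemma 2.1(2)): under the stated hypotheses, if the power series D(T) is entire then there exist an index i_0 ∈ {1,...,R}, nonnegative integers m_1,...,m_R and strictly positive integers n_1,...,n_S such that, setting γ := α_{i_0}, one has α_i = q^{m_i}·γ for all i = 1,...,R and β_j = q^{n_j}·γ for all j = 1,...,S. -/

import Mathlib

open scoped BigOperators Classical

noncomputable section

namespace HS

/-- `c(m) = binom(m+s-1, s-1)`. -/
def cbin (s m : ℕ) : ℕ := Nat.choose (m + s - 1) (s - 1)

/-- The partial product `∏_{m=0}^{M} (1 - q^m γ T)^{c(m)}` as a power series. -/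
def Hpartial {K : Type} [Field K] (s : ℕ) (qK γ : K) (M : ℕ) : PowerSeries K :=
  ∏ m ∈ Finset.range (M + 1),
    (1 - PowerSeries.C (qK ^ m * γ) * PowerSeries.X) ^ cbin s m

/-- Coefficientwise convergence of the partial products `∏_{m=0}^M (1-q^mγT)^{c(m)}`
to a power series `H`, with respect to the absolute value `v`. -/
def ConvergesTo {K : Type} [Field K] (v : AbsoluteValue K ℝ) (s : ℕ) (qK γ : K)
    (H : PowerSeries K) : Prop :=
  ∀ n : ℕ, ∀ ε : ℝ, 0 < ε → ∃ M0 : ℕ, ∀ M : ℕ, M0 ≤ M →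
    v (PowerSeries.coeff n (Hpartial s qK γ M) - PowerSeries.coeff n H) < ε

/-- Completeness of `K` with respect to `v`: every `v`-Cauchy sequence converges. -/
def IsCompleteWrt {K : Type} [Field K] (v : AbsoluteValue K ℝ) : Prop :=
  ∀ g : ℕ → K, (∀ ε : ℝ, 0 < ε → ∃ N, ∀ m₁, N ≤ m₁ → ∀ m₂, N ≤ m₂ → v (g m₁ - g m₂) < ε) →
    ∃ l : K, ∀ ε : ℝ, 0 < ε → ∃ N, ∀ m₁, N ≤ m₁ → v (g m₁ - l) < ε

/-- `D = ∑ c_n T^n` is entire: `|c_n|·M^n → 0` for every real `M > 0`. -/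
def IsEntireWrt {K : Type} [Field K] (v : AbsoluteValue K ℝ) (D : PowerSeries K) : Prop :=
  ∀ M : ℝ, 0 < M → Filter.Tendsto (fun n : ℕ => v (PowerSeries.coeff n D) * M ^ n)
    Filter.atTop (nhds 0)

section helpers

variable {K : Type} [Field K]

def II (v : AbsoluteValue K ℝ) (r : ℝ) (A : PowerSeries K) : Prop :=
  ∀ n, v (PowerSeries.coeff n A) * r ^ n ≤ 1

def EE (v : AbsoluteValue K ℝ) (r : ℝ) (A : PowerSeries K) : Prop :=
  ∀ n, v (PowerSeries.coeff n A) * r ^ n < 1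

theorem sum_lt {ι : Type} (v : AbsoluteValue K ℝ) (hna : ∀ x y : K, v (x + y) ≤ max (v x) (v y))
    (c : ℝ) (hc : 0 ≤ c) (t : Finset ι) (f : ι → K) (h : ∀ i ∈ t, v (f i) * c < 1) :
    v (∑ i ∈ t, f i) * c < 1 := by
  induction t using Finset.induction_on with
  | empty => simp
  | insert i t hi ih =>
    rw [Finset.sum_insert hi]
    have h1 := h i (Finset.mem_insert_self i t)
    have h2 := ih (fun k hk => h k (Finset.mem_insert_of_mem hk))
    have h3 := mul_le_mul_of_nonneg_right (hna (f i) (∑ i ∈ t, f i)) hc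
    rcases max_cases (v (f i)) (v (∑ i ∈ t, f i)) with h4 | h4 <;> rw [h4.1] at h3 <;> linarith

theorem sum_le {ι : Type} (v : AbsoluteValue K ℝ) (hna : ∀ x y : K, v (x + y) ≤ max (v x) (v y))
    (c : ℝ) (hc : 0 ≤ c) (t : Finset ι) (f : ι → K) (h : ∀ i ∈ t, v (f i) * c ≤ 1) :
    v (∑ i ∈ t, f i) * c ≤ 1 := by
  induction t using Finset.induction_on with
  | empty => simp
  | insert i t hi ih =>
    rw [Finset.sum_insert hi]
    have h1 := h i (Finset.mem_insert_self i t)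
    have h2 := ih (fun k hk => h k (Finset.mem_insert_of_mem hk))
    have h3 := mul_le_mul_of_nonneg_right (hna (f i) (∑ i ∈ t, f i)) hc
    rcases max_cases (v (f i)) (v (∑ i ∈ t, f i)) with h4 | h4 <;> rw [h4.1] at h3 <;> linarith

theorem II.mul {v : AbsoluteValue K ℝ} (hna : ∀ x y : K, v (x + y) ≤ max (v x) (v y))
    {r : ℝ} (hr : 0 < r) {A B : PowerSeries K} (hA : II v r A) (hB : II v r B) :
    II v r (A * B) := by
  intro n
  rw [PowerSeries.coeff_mul]
  apply sum_le v hna _ (by positivity)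
  rintro ⟨i, j⟩ hij
  rw [Finset.HasAntidiagonal.mem_antidiagonal] at hij
  simp only at hij ⊢
  rw [← hij, map_mul, pow_add, mul_mul_mul_comm]
  exact mul_le_one₀ (hA i) (mul_nonneg (v.nonneg _) (by positivity)) (hB j)

theorem EE.mul {v : AbsoluteValue K ℝ} (hna : ∀ x y : K, v (x + y) ≤ max (v x) (v y))
    {r : ℝ} (hr : 0 < r) {A B : PowerSeries K} (hA : EE v r A) (hB : II v r B) :
    EE v r (A * B) := by
  intro n
  rw [PowerSeries.coeff_mul]
  apply sum_lt v hna _ (by positivity)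
  rintro ⟨i, j⟩ hij
  rw [Finset.HasAntidiagonal.mem_antidiagonal] at hij
  simp only at hij ⊢
  rw [← hij, map_mul, pow_add, mul_mul_mul_comm]
  exact mul_lt_one_of_nonneg_of_lt_one_left (mul_nonneg (v.nonneg _) (by positivity)) (hA i) (hB j)

theorem EE.add {v : AbsoluteValue K ℝ} (hna : ∀ x y : K, v (x + y) ≤ max (v x) (v y))
    {r : ℝ} (hr : 0 < r) {A B : PowerSeries K} (hA : EE v r A) (hB : EE v r B) :
    EE v r (A + B) := by
  intro n
  have h3 := mul_le_mul_of_nonneg_right (hna (PowerSeries.coeff n A) (PowerSeries.coeff n B))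
    (pow_nonneg hr.le n)
  have h1 := hA n
  have h2 := hB n
  rw [map_add]
  rcases max_cases (v (PowerSeries.coeff n A)) (v (PowerSeries.coeff n B)) with h4 | h4 <;>
    rw [h4.1] at h3 <;> linarith

theorem II.add {v : AbsoluteValue K ℝ} (hna : ∀ x y : K, v (x + y) ≤ max (v x) (v y))
    {r : ℝ} (hr : 0 < r) {A B : PowerSeries K} (hA : II v r A) (hB : II v r B) :
    II v r (A + B) := by
  intro n
  have h3 := mul_le_mul_of_nonneg_right (hna (PowerSeries.coeff n A) (PowerSeries.coeff n B))
    (pow_nonneg hr.le n)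
  have h1 := hA n
  have h2 := hB n
  rw [map_add]
  rcases max_cases (v (PowerSeries.coeff n A)) (v (PowerSeries.coeff n B)) with h4 | h4 <;>
    rw [h4.1] at h3 <;> linarith

theorem EE.neg {v : AbsoluteValue K ℝ} {r : ℝ} {A : PowerSeries K} (hA : EE v r A) :
    EE v r (-A) := by
  intro n
  rw [map_neg, v.map_neg]
  exact hA n

theorem EE.toII {v : AbsoluteValue K ℝ} {r : ℝ} {A : PowerSeries K} (hA : EE v r A) :
    II v r A := fun n => (hA n).le

/-- congruence of integral series -/
def CC (v : AbsoluteValue K ℝ) (r : ℝ) (A B : PowerSeries K) : Prop :=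
  II v r A ∧ II v r B ∧ EE v r (A - B)

theorem CC.mul {v : AbsoluteValue K ℝ} (hna : ∀ x y : K, v (x + y) ≤ max (v x) (v y))
    {r : ℝ} (hr : 0 < r) {A B A' B' : PowerSeries K} (hA : CC v r A A') (hB : CC v r B B') :
    CC v r (A * B) (A' * B') := by
  refine ⟨hA.1.mul hna hr hB.1, hA.2.1.mul hna hr hB.2.1, ?_⟩
  have : A * B - A' * B' = (A - A') * B + (B - B') * A' := by ring
  rw [this]
  exact (hA.2.2.mul hna hr hB.1).add hna hr (hB.2.2.mul hna hr hA.2.1)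

theorem II_one (v : AbsoluteValue K ℝ) (r : ℝ) : II v r 1 := by
  intro n
  rw [PowerSeries.coeff_one]
  split_ifs with h
  · simp [h]
  · simp

theorem CC.refl {v : AbsoluteValue K ℝ} {r : ℝ} {A : PowerSeries K} (hA : II v r A) :
    CC v r A A := by
  refine ⟨hA, hA, ?_⟩
  intro n
  simp

theorem CC.prod {ι : Type} {v : AbsoluteValue K ℝ}
    (hna : ∀ x y : K, v (x + y) ≤ max (v x) (v y))
    {r : ℝ} (hr : 0 < r) (t : Finset ι) (A B : ι → PowerSeries K)
    (h : ∀ i ∈ t, CC v r (A i) (B i)) :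
    CC v r (∏ i ∈ t, A i) (∏ i ∈ t, B i) := by
  induction t using Finset.induction_on with
  | empty => simpa using CC.refl (II_one v r)
  | insert i t hi ih =>
    rw [Finset.prod_insert hi, Finset.prod_insert hi]
    exact (h i (Finset.mem_insert_self i t)).mul hna hr
      (ih (fun k hk => h k (Finset.mem_insert_of_mem hk)))

theorem CC.pow {v : AbsoluteValue K ℝ}
    (hna : ∀ x y : K, v (x + y) ≤ max (v x) (v y))
    {r : ℝ} (hr : 0 < r) {A B : PowerSeries K} (h : CC v r A B) (k : ℕ) :
    CC v r (A ^ k) (B ^ k) := by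
  have := CC.prod hna hr (Finset.range k) (fun _ => A) (fun _ => B) (fun _ _ => h)
  simpa using this

theorem II_lin {v : AbsoluteValue K ℝ} (hna : ∀ x y : K, v (x + y) ≤ max (v x) (v y))
    {r : ℝ} (hr : 0 < r) (g : K) (hg : v g * r ≤ 1) :
    II v r (1 - PowerSeries.C g * PowerSeries.X) := by
  rw [sub_eq_add_neg]
  refine (II_one v r).add hna hr ?_
  intro n
  rw [map_neg, v.map_neg, PowerSeries.coeff_C_mul, PowerSeries.coeff_X]
  split_ifs with h
  · simpa [h] using hg
  · simp

theorem CC_lin {v : AbsoluteValue K ℝ} (hna : ∀ x y : K, v (x + y) ≤ max (v x) (v y))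
    {r : ℝ} (hr : 0 < r) (g : K) (hg : v g * r < 1) :
    CC v r (1 - PowerSeries.C g * PowerSeries.X) 1 := by
  refine ⟨II_lin hna hr g hg.le, II_one v r, ?_⟩
  intro n
  rw [sub_sub_cancel_left, map_neg, v.map_neg, PowerSeries.coeff_C_mul, PowerSeries.coeff_X]
  split_ifs with h
  · simpa [h] using hg
  · simp

theorem CC_H {v : AbsoluteValue K ℝ} (hna : ∀ x y : K, v (x + y) ≤ max (v x) (v y))
    {r : ℝ} (hr : 0 < r) (s : ℕ) (q g : K) (hq : v q < 1) (hg : v g * r ≤ 1)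
    (H : PowerSeries K) (hH : ConvergesTo v s q g H) :
    CC v r H (1 - PowerSeries.C g * PowerSeries.X) := by
  have hp : ∀ M, CC v r (Hpartial s q g M) (1 - PowerSeries.C g * PowerSeries.X) := by
    intro M
    unfold Hpartial
    rw [Finset.prod_range_succ']
    have h0 : cbin s 0 = 1 := by simp [cbin]
    rw [h0, pow_zero, one_mul, pow_one]
    have h1 := CC.prod hna hr (Finset.range M)
      (fun m => (1 - PowerSeries.C (q ^ (m + 1) * g) * PowerSeries.X) ^ cbin s (m + 1))
      (fun m => 1 ^ cbin s (m + 1)) (by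
        intro m _
        refine (CC_lin hna hr _ ?_).pow hna hr _
        rw [map_mul, map_pow, mul_assoc]
        have : v q ^ (m + 1) < 1 := pow_lt_one₀ (v.nonneg _) hq (by omega)
        exact mul_lt_one_of_nonneg_of_lt_one_left (pow_nonneg (v.nonneg _) _) this hg)
    have h2 := h1.mul hna hr (CC.refl (II_lin hna hr g hg))
    simpa using h2
  have hE : EE v r (H - (1 - PowerSeries.C g * PowerSeries.X)) := by
    intro n
    obtain ⟨M, hM⟩ := hH n ((r ^ n)⁻¹) (by positivity)
    have h1 := hM M le_rfl
    rw [← one_div, lt_div_iff₀ (by positivity)] at h1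
    have h2 := (hp M).2.2 n
    have h3 : PowerSeries.coeff n (H - (1 - PowerSeries.C g * PowerSeries.X)) =
      -(PowerSeries.coeff n (Hpartial s q g M) - PowerSeries.coeff n H) +
      PowerSeries.coeff n (Hpartial s q g M - (1 - PowerSeries.C g * PowerSeries.X)) := by
      simp only [map_sub]; ring
    rw [h3]
    have h4 := mul_le_mul_of_nonneg_right
      (hna (-(PowerSeries.coeff n (Hpartial s q g M) - PowerSeries.coeff n H))
        (PowerSeries.coeff n (Hpartial s q g M - (1 - PowerSeries.C g * PowerSeries.X))))
      (pow_nonneg hr.le n)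
    rw [v.map_neg] at h4
    rw [max_mul_of_nonneg _ _ (pow_nonneg hr.le n)] at h4
    exact lt_of_le_of_lt h4 (max_lt h1 h2)
  have hI := II_lin hna hr g hg
  refine ⟨?_, hI, hE⟩
  have := hE.toII.add hna hr hI
  simpa using this

theorem II_quot {v : AbsoluteValue K ℝ} (hna : ∀ x y : K, v (x + y) ≤ max (v x) (v y))
    {r : ℝ} (hr : 0 < r) (D B : PowerSeries K) (hB : II v r B)
    (hB0 : 1 ≤ v (PowerSeries.coeff 0 B)) (hDB : II v r (D * B)) : II v r D := by
  intro n
  induction n using Nat.strong_induction_on with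
  | _ n ih =>
    have h1 : PowerSeries.coeff n (D * B) = PowerSeries.coeff n D * PowerSeries.coeff 0 B +
        ∑ k ∈ Finset.range n, PowerSeries.coeff k D * PowerSeries.coeff (n - k) B := by
      rw [PowerSeries.coeff_mul, Finset.Nat.sum_antidiagonal_eq_sum_range_succ
        (fun i j => PowerSeries.coeff i D * PowerSeries.coeff j B), Finset.sum_range_succ]
      simp [add_comm]
    have h2 : v (∑ k ∈ Finset.range n, PowerSeries.coeff k D * PowerSeries.coeff (n - k) B) * r ^ n
        ≤ 1 := by
      apply sum_le v hna _ (by positivity)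
      intro k hk
      have hk := Finset.mem_range.1 hk
      have : r ^ n = r ^ k * r ^ (n - k) := by rw [← pow_add]; congr 1; omega
      rw [this, map_mul, mul_mul_mul_comm]
      exact mul_le_one₀ (ih k hk) (mul_nonneg (v.nonneg _) (by positivity)) (hB _)
    have h3 := hDB n
    have h4 : PowerSeries.coeff n D * PowerSeries.coeff 0 B = PowerSeries.coeff n (D * B) +
       -(∑ k ∈ Finset.range n, PowerSeries.coeff k D * PowerSeries.coeff (n - k) B) := by
      rw [h1]; ring
    have h5 := mul_le_mul_of_nonneg_right (hna (PowerSeries.coeff n (D * B))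
      (-(∑ k ∈ Finset.range n, PowerSeries.coeff k D * PowerSeries.coeff (n - k) B)))
      (pow_nonneg hr.le n)
    rw [← h4, v.map_neg, max_mul_of_nonneg _ _ (pow_nonneg hr.le n), map_mul] at h5
    have h6 := h5.trans (max_le h3 h2)
    refine le_trans ?_ h6
    gcongr
    exact le_mul_of_one_le_right (v.nonneg _) hB0

theorem eval_lt {v : AbsoluteValue K ℝ} (hna : ∀ x y : K, v (x + y) ≤ max (v x) (v y))
    (P : Polynomial K) (x : K) (hP : EE v (v x) (P : PowerSeries K)) : v (P.eval x) < 1 := by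
  rw [Polynomial.eval_eq_sum_range]
  have := sum_lt v hna 1 zero_le_one (Finset.range (P.natDegree + 1))
    (fun i => P.coeff i * x ^ i) (by
      intro i _
      have := hP i
      simpa using this)
  simpa using this

theorem v_one_sub {v : AbsoluteValue K ℝ} (hna : ∀ x y : K, v (x + y) ≤ max (v x) (v y))
    (x : K) (hx : v x < 1) : 1 ≤ v (1 - x) := by
  have := hna (1 - x) x
  rw [sub_add_cancel, map_one] at this
  rcases le_max_iff.1 this with h | h
  · exact h
  · linarith

theorem key {v : AbsoluteValue K ℝ} (hna : ∀ x y : K, v (x + y) ≤ max (v x) (v y))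
    (s : ℕ) (q : K) (hq : v q < 1) (R S : ℕ) (α : Fin R → K) (β : Fin S → K)
    (Hα : Fin R → PowerSeries K) (Hβ : Fin S → PowerSeries K)
    (hHα : ∀ i, ConvergesTo v s q (α i) (Hα i))
    (hHβ : ∀ j, ConvergesTo v s q (β j) (Hβ j))
    (D : PowerSeries K)
    (hD : D * ∏ j, Hβ j = ∏ i, Hα i)
    (hent : IsEntireWrt v D) (j₀ : Fin S) (hj₀ : β j₀ ≠ 0)
    (h1 : ∀ j, v (β j) ≤ v (β j₀)) (h2 : ∀ i, v (α i) < v (β j₀)) : False := by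
  set x := (β j₀)⁻¹ with hx
  have hb : 0 < v (β j₀) := v.pos hj₀
  have hvx : v x = (v (β j₀))⁻¹ := map_inv₀ v _
  have hr : 0 < v x := by rw [hvx]; positivity
  have h1' : ∀ j, v (β j) * v x ≤ 1 := by
    intro j
    rw [hvx, ← div_eq_mul_inv, div_le_one hb]; exact h1 j
  have h2' : ∀ i, v (α i) * v x < 1 := by
    intro j
    rw [hvx, ← div_eq_mul_inv, div_lt_one hb]; exact h2 j
  have cB := CC.prod hna hr Finset.univ _ _
    (fun j _ => CC_H hna hr s q (β j) hq (h1' j) (Hβ j) (hHβ j))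
  have cA := CC.prod hna hr Finset.univ _ _
    (fun j _ => CC_H hna hr s q (α j) hq (h2' j).le (Hα j) (hHα j))
  have hB0 : 1 ≤ v (PowerSeries.coeff 0 (∏ j, Hβ j)) := by
    have h := cB.2.2 0
    rw [← v.map_neg, ← map_neg, neg_sub, map_sub] at h
    have h' : PowerSeries.coeff 0 (∏ j, (1 - PowerSeries.C (β j) * PowerSeries.X)) = (1 : K) := by
      simp [PowerSeries.coeff_zero_eq_constantCoeff, map_prod]
    rw [h', pow_zero, mul_one] at h
    simpa using v_one_sub hna _ h
  have hDI : II v (v x) D := II_quot hna hr D _ cB.1 hB0 (by rw [hD]; exact cA.1)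
  have hlim := hent (v x) hr
  obtain ⟨N, hN⟩ := Filter.eventually_atTop.1 (hlim.eventually (gt_mem_nhds one_pos))
  have cD : CC v (v x) D (PowerSeries.trunc N D : Polynomial K) := by
    refine ⟨hDI, ?_, ?_⟩
    · intro n
      rw [Polynomial.coeff_coe, PowerSeries.coeff_trunc]
      split_ifs
      · exact hDI n
      · simp
    · intro n
      rw [map_sub, Polynomial.coeff_coe, PowerSeries.coeff_trunc]
      split_ifs with h
      · simp
      · simpa using hN n (not_lt.1 h)
  have cDB := cD.mul hna hr cB
  rw [hD] at cDB
  have hE := cDB.2.2.neg.add hna hr cA.2.2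
  let P : Polynomial K := PowerSeries.trunc N D * ∏ j, (1 - Polynomial.C (β j) * Polynomial.X)
    - ∏ i, (1 - Polynomial.C (α i) * Polynomial.X)
  have hP : (P : PowerSeries K) = -(∏ i, Hα i - (PowerSeries.trunc N D : Polynomial K) *
      ∏ j, (1 - PowerSeries.C (β j) * PowerSeries.X)) +
      (∏ i, Hα i - ∏ i, (1 - PowerSeries.C (α i) * PowerSeries.X)) := by
    have hc : ∀ (n : ℕ) (a : Fin n → K),
      ((∏ i, (1 - Polynomial.C (a i) * Polynomial.X) : Polynomial K) : PowerSeries K) =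
        ∏ i, (1 - PowerSeries.C (a i) * PowerSeries.X) := by
      intro n a
      rw [← Polynomial.coeToPowerSeries.ringHom_apply, map_prod]
      simp
    simp only [P, Polynomial.coe_sub, Polynomial.coe_mul, hc]
    ring
  rw [← hP] at hE
  have hlt := eval_lt hna P x hE
  have hev : P.eval x = - ∏ i, (1 - α i * x) := by
    have : ∏ j, (1 - β j * x) = 0 :=
      Finset.prod_eq_zero (Finset.mem_univ j₀) (by rw [hx, mul_inv_cancel₀ hj₀, sub_self])
    simp [P, Polynomial.eval_prod, this]
  rw [hev, v.map_neg, map_prod] at hlt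
  have : 1 ≤ ∏ i, v (1 - α i * x) := by
    refine Finset.prod_induction _ (fun t : ℝ => 1 ≤ t)
      (fun a b ha hb => one_le_mul_of_one_le_of_one_le ha hb) le_rfl ?_
    intro i _
    exact v_one_sub hna _ (by rw [map_mul]; exact h2' i)
  linarith

theorem zpow_cases {v : AbsoluteValue K ℝ} (q : K) (hq0 : q ≠ 0) (hq : v q < 1)
    (x y : K) (hy : y ≠ 0) (hle : v x ≤ v y) (τ : ℤ) (h : x = q ^ τ * y) :
    ∃ n : ℕ, x = q ^ n * y := by
  have h0 : 0 ≤ τ := by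
    by_contra! hneg
    have h1 : 1 < v q ^ τ := one_lt_zpow_of_neg₀ (v.pos hq0) hq hneg
    rw [h, map_mul, map_zpow₀] at hle
    have := v.pos hy
    nlinarith
  obtain ⟨n, rfl⟩ := Int.eq_ofNat_of_zero_le h0
  exact ⟨n, by simpa using h⟩

end helpers

/-- Bombieri-type lemma, part 2: if `D(T)` is entire, then there is a choice
`γ = α_{i₀}` such that `α_i = q^{m_i}·γ` with `m_i ≥ 0` and `β_j = q^{n_j}·γ` with `n_j ≥ 1`. -/
theorem bombieri_lemma_part2
    (p a s : ℕ) (hp : p.Prime) (ha : 1 ≤ a) (hs : 1 ≤ s)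
    (K : Type) [Field K] (v : AbsoluteValue K ℝ)
    (hna : ∀ x y : K, v (x + y) ≤ max (v x) (v y))
    (hres : ∀ r : ℚ, v ((r : K)) = (padicNorm p r : ℝ))
    (hcompl : IsCompleteWrt v)
    (R S : ℕ) (hR : 1 ≤ R) (α : Fin R → K) (β : Fin S → K)
    (hα0 : ∀ i, α i ≠ 0) (hβ0 : ∀ j, β j ≠ 0)
    (hrel : ∀ x ∈ Set.range α ∪ Set.range β, ∀ y ∈ Set.range α ∪ Set.range β,
      ∃ τ : ℤ, x = ((p : K) ^ a) ^ τ * y)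
    (hne : ∀ i j, α i ≠ β j)
    (Hα : Fin R → PowerSeries K) (Hβ : Fin S → PowerSeries K)
    (hHα : ∀ i, ConvergesTo v s ((p : K) ^ a) (α i) (Hα i))
    (hHβ : ∀ j, ConvergesTo v s ((p : K) ^ a) (β j) (Hβ j))
    (D : PowerSeries K)
    (hD : D * ∏ j, Hβ j = ∏ i, Hα i)
    (hent : IsEntireWrt v D) :
    ∃ i₀ : Fin R, ∃ mm : Fin R → ℕ, ∃ nn : Fin S → ℕ,
      (∀ j, 0 < nn j) ∧
      (∀ i, α i = ((p : K) ^ a) ^ mm i * α i₀) ∧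
      (∀ j, β j = ((p : K) ^ a) ^ nn j * α i₀) := by
  have hvp : v ((p : K)) < 1 := by
    have h := hres (p : ℚ)
    have : Fact p.Prime := ⟨hp⟩
    rw [padicNorm.padicNorm_p hp.one_lt] at h
    push_cast at h
    rw [h]
    exact inv_lt_one_of_one_lt₀ (by exact_mod_cast hp.one_lt)
  have hp0 : (p : K) ≠ 0 := by
    intro h0
    have h := hres (p : ℚ)
    rw [padicNorm.padicNorm_p hp.one_lt] at h
    push_cast at h
    rw [h0, map_zero] at h
    have : (0 : ℝ) < (p : ℝ)⁻¹ := by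
      have : (0 : ℝ) < p := by exact_mod_cast hp.pos
      positivity
    linarith
  have hq0 : (p : K) ^ a ≠ 0 := pow_ne_zero _ hp0
  have hq : v ((p : K) ^ a) < 1 := by
    rw [map_pow]
    exact pow_lt_one₀ (v.nonneg _) hvp (by omega)
  generalize (p : K) ^ a = q at *
  have hmA : ∀ i, α i ∈ Set.range α ∪ Set.range β := fun i => Or.inl ⟨i, rfl⟩
  have hmB : ∀ j, β j ∈ Set.range α ∪ Set.range β := fun j => Or.inr ⟨j, rfl⟩
  have : Nonempty (Fin R ⊕ Fin S) := ⟨Sum.inl ⟨0, hR⟩⟩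
  obtain ⟨k, hk⟩ := Finite.exists_max (fun k : Fin R ⊕ Fin S => v (Sum.elim α β k))
  rcases k with i₀ | j₀
  · have hA : ∀ i, ∃ n : ℕ, α i = q ^ n * α i₀ := by
      intro i
      obtain ⟨τ, hτ⟩ := hrel _ (hmA i) _ (hmA i₀)
      exact zpow_cases q hq0 hq _ _ (hα0 i₀) (hk (Sum.inl i)) τ hτ
    have hB : ∀ j, ∃ n : ℕ, β j = q ^ n * α i₀ := by
      intro j
      obtain ⟨τ, hτ⟩ := hrel _ (hmB j) _ (hmA i₀)
      exact zpow_cases q hq0 hq _ _ (hα0 i₀) (hk (Sum.inr j)) τ hτ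
    choose mm hmm using hA
    choose nn hnn using hB
    refine ⟨i₀, mm, nn, ?_, hmm, hnn⟩
    intro j
    rcases Nat.eq_zero_or_pos (nn j) with h | h
    · exfalso
      have := hnn j
      rw [h, pow_zero, one_mul] at this
      exact hne _ _ this.symm
    · exact h
  · exfalso
    refine key hna s q hq R S α β Hα Hβ hHα hHβ D hD hent j₀ (hβ0 j₀)
      (fun j => hk (Sum.inr j)) ?_
    intro i
    obtain ⟨τ, hτ⟩ := hrel _ (hmA i) _ (hmB j₀)
    obtain ⟨n, hn⟩ : ∃ n : ℕ, α i = q ^ n * β j₀ := zpow_cases q hq0 hq _ _ (hβ0 j₀) (hk (Sum.inl i)) τ hτ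
    have hn0 : n ≠ 0 := by
      rintro rfl
      rw [pow_zero, one_mul] at hn
      exact hne _ _ hn
    rw [hn, map_mul, map_pow]
    exact mul_lt_of_lt_one_left (v.pos (hβ0 j₀)) (pow_lt_one₀ (v.nonneg _) hq hn0)

end HS
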